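/- Let t ≥ 3 be an integer, let G be a finite simple graph, and let Z = {e ∈ E(G) : p(e) < t−1}. Then equality holds in the bound N(G,K_t) ≤ (1/C(t,2)) · ∑_{e ∈ E(G)} C(p(e)−1, t−2) if and only if every connected component of the graph G∖Z obtained from G by deleting the edges of Z is a clique. -/

import Mathlib

open SimpleGraph Finset

/-- Number of copies of the complete graph `K_t` in `G`. -/
noncomputable def cliqueCount {V : Type*} (G : SimpleGraph V) (t : ℕ) : ℕ :=
  Set.ncard {s : Finset V | G.IsNClique t s}

/-- `maxPathLen G e` is the maximum length (number of edges) of a path in `G`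
containing the edge `e`. -/
noncomputable def maxPathLen {V : Type*} (G : SimpleGraph V) (e : Sym2 V) : ℕ :=
  sSup {n : ℕ | ∃ (u v : V) (w : G.Walk u v), w.IsPath ∧ e ∈ w.edges ∧ w.length = n}

/-!
Write `p(e)` and `P(u)` for the maximum length of a path through an edge `e` and through a vertex
`u`. A path in the link of `v` through a neighbour `u` becomes, when `v` is inserted next to `u`, a
path of `G` through the edge `vu`. So summing the vertex inequality
`(r + 1) N(H, K_{r+1}) ≤ ∑ C(P(u), r)` over all links `H` gives the edge bound with `t = r + 2`.

For the vertex inequality, take a longest path of `H`. Either one of its ends has degree at most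
half the length of the path, and removing that end destroys few cliques; or, by Pósa's argument,
its vertices carry a spanning cycle and hence form a component, which is removed as a whole.

If equality holds, then every component removed with more than `r` vertices is a clique, and no
low-degree vertex removed lies on a path of length `r`. Transferred from the links to `G`, this says
that each edge with `p(e) ≥ r + 1` lies in a clique of `p(e) + 1` vertices. A vertex adjacent to
such a clique from outside would give a longer path through `e`, which makes adjacency in `G ∖ Z`
transitive; conversely, a longest path through `e` stays inside one component of `G ∖ Z`.
-/

section Choose

lemma two_pow_mul_choose_le_choose {d k : ℕ} (h : 2 * d ≤ k) (r : ℕ) :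
    2 ^ r * d.choose r ≤ k.choose r := by
  have descFactorial_le : 2 ^ r * d.descFactorial r ≤ k.descFactorial r := by
    induction r with
    | zero => simp
    | succ r ih =>
      calc 2 ^ (r + 1) * d.descFactorial (r + 1)
          = 2 * (d - r) * (2 ^ r * d.descFactorial r) := by
            rw [Nat.descFactorial_succ, pow_succ]; ring
        _ ≤ (k - r) * k.descFactorial r := Nat.mul_le_mul (by lia) ih
        _ = k.descFactorial (r + 1) := (Nat.descFactorial_succ k r).symm
  rw [Nat.descFactorial_eq_factorial_mul_choose, Nat.descFactorial_eq_factorial_mul_choose,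
    mul_left_comm] at descFactorial_le
  exact Nat.le_of_mul_le_mul_left descFactorial_le r.factorial_pos

lemma succ_mul_choose_le_choose {d k : ℕ} (h : 2 * d ≤ k) (r : ℕ) :
    (r + 1) * d.choose r ≤ k.choose r :=
  (Nat.mul_le_mul_right _ Nat.lt_two_pow_self).trans (two_pow_mul_choose_le_choose h r)

lemma succ_mul_choose_lt_choose {d k r : ℕ} (h : 2 * d ≤ k) (hr : 2 ≤ r) (hk : r ≤ k) :
    (r + 1) * d.choose r < k.choose r := by
  have succ_lt_two_pow : r + 1 < 2 ^ r := by
    induction r, hr using Nat.le_induction with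
    | base => norm_num
    | succ n _ ih => have := ih (by lia); rw [pow_succ]; lia
  rcases (d.choose r).eq_zero_or_pos with h0 | hpos
  · simpa [h0] using Nat.choose_pos hk
  · exact (Nat.mul_lt_mul_of_pos_right succ_lt_two_pow hpos).trans_le
      (two_pow_mul_choose_le_choose h r)

lemma eq_of_choose_eq_choose {p q r : ℕ} (hr : 1 ≤ r) (hpq : p ≤ q) (hq : r ≤ q)
    (h : p.choose r = q.choose r) : p = q := by
  by_contra hne
  obtain ⟨s, rfl⟩ := Nat.exists_eq_add_of_le' hr
  obtain ⟨m, rfl⟩ := Nat.exists_eq_add_of_lt (hpq.lt_of_ne hne)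
  have pascal := Nat.choose_succ_succ (p + m) s
  have := Nat.choose_le_choose (s + 1) (Nat.le_add_right p m)
  have : 0 < (p + m).choose s := Nat.choose_pos (by lia)
  lia

end Choose

section PathLength

variable {V : Type*} {G H : SimpleGraph V} {a b u v : V}

/-- The maximum length of a path in `G` through the vertex `u`, the vertex analogue of
`maxPathLen`. It is `0` at an isolated vertex. -/
noncomputable def maxPathLenAt (G : SimpleGraph V) (u : V) : ℕ :=
  sSup {n : ℕ | ∃ (a b : V) (w : G.Walk a b), w.IsPath ∧ u ∈ w.support ∧ w.length = n}

lemma bddAbove_setOf_isPath_length [Finite V] (p : ∀ ⦃a b : V⦄, G.Walk a b → Prop) :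
    BddAbove {n : ℕ | ∃ (a b : V) (w : G.Walk a b), w.IsPath ∧ p w ∧ w.length = n} := by
  have := Fintype.ofFinite V
  refine ⟨Fintype.card V, ?_⟩
  rintro n ⟨a, b, w, hw, -, rfl⟩
  exact hw.length_lt.le

lemma length_le_maxPathLenAt [Finite V] {w : G.Walk a b} (hw : w.IsPath) (hu : u ∈ w.support) :
    w.length ≤ maxPathLenAt G u :=
  le_csSup (bddAbove_setOf_isPath_length fun _ _ w ↦ u ∈ w.support) ⟨a, b, w, hw, hu, rfl⟩

lemma length_le_maxPathLen [Finite V] {w : G.Walk a b} {e : Sym2 V} (hw : w.IsPath)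
    (he : e ∈ w.edges) : w.length ≤ maxPathLen G e :=
  le_csSup (bddAbove_setOf_isPath_length fun _ _ w ↦ e ∈ w.edges) ⟨a, b, w, hw, he, rfl⟩

lemma exists_isPath_length_eq_maxPathLenAt [Finite V] (G : SimpleGraph V) (u : V) :
    ∃ (a b : V) (w : G.Walk a b), w.IsPath ∧ u ∈ w.support ∧ w.length = maxPathLenAt G u :=
  Nat.sSup_mem (s := {n | ∃ (a b : V) (w : G.Walk a b), w.IsPath ∧ u ∈ w.support ∧ w.length = n})
    ⟨0, u, u, .nil, by simp⟩ (bddAbove_setOf_isPath_length fun _ _ w ↦ u ∈ w.support)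

lemma exists_isPath_length_eq_maxPathLen [Finite V] (h : G.Adj u v) :
    ∃ (a b : V) (w : G.Walk a b),
      w.IsPath ∧ s(u, v) ∈ w.edges ∧ w.length = maxPathLen G s(u, v) :=
  Nat.sSup_mem
    (s := {n | ∃ (a b : V) (w : G.Walk a b), w.IsPath ∧ s(u, v) ∈ w.edges ∧ w.length = n})
    ⟨1, u, v, h.toWalk, by simp [h.ne]⟩
    (bddAbove_setOf_isPath_length fun _ _ w ↦ s(u, v) ∈ w.edges)

lemma one_le_maxPathLen [Finite V] (h : G.Adj u v) : 1 ≤ maxPathLen G s(u, v) :=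
  length_le_maxPathLen (w := h.toWalk) (by simp [h.ne]) (by simp)

lemma maxPathLenAt_mono [Finite V] (hHG : H ≤ G) (u : V) :
    maxPathLenAt H u ≤ maxPathLenAt G u := by
  obtain ⟨a, b, w, hw, hu, hlen⟩ := exists_isPath_length_eq_maxPathLenAt H u
  simpa [hlen] using length_le_maxPathLenAt (hw.mapLe hHG) (u := u) (by simpa using hu)

lemma maxPathLenAt_eq_zero [Finite V] (h : ∀ v, ¬G.Adj u v) : maxPathLenAt G u = 0 := by
  obtain ⟨a, b, w, -, hu, hlen⟩ := exists_isPath_length_eq_maxPathLenAt G u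
  rw [← hlen, Walk.length_eq_zero_iff]
  by_contra hnil
  obtain ⟨e, he, hue⟩ := (Walk.mem_support_iff_exists_mem_edges_of_not_nil hnil).1 hu
  obtain ⟨v, rfl⟩ := Sym2.mem_iff_exists.1 hue
  exact h v (w.adj_of_mem_edges he)

end PathLength

section Clique

variable {V : Type*} {G : SimpleGraph V} {K : Finset V} {x y z : V}

lemma exists_isPath_of_isClique [DecidableEq V] (hK : G.IsClique (K : Set V)) (hx : x ∈ K) :
    ∃ (y : V) (w : G.Walk x y), w.IsPath ∧ w.support.toFinset = K := by
  induction K using Finset.strongInduction generalizing x with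
  | H K ih =>
    obtain hempty | ⟨z, hz⟩ := (K.erase x).eq_empty_or_nonempty
    · refine ⟨x, .nil, .nil, ?_⟩
      rw [← insert_erase hx, hempty]
      rfl
    · obtain ⟨y, w, hw, hsupp⟩ := ih _ (erase_ssubset hx) (hK.subset (by simp)) hz
      have hxz : G.Adj x z := hK hx (mem_of_mem_erase hz) (ne_of_mem_erase hz).symm
      have hxw : x ∉ w.support := by simp [← List.mem_toFinset, hsupp]
      exact ⟨y, w.cons hxz, hw.cons hxw, by simp [hsupp, insert_erase hx]⟩

lemma exists_isPath_cons_of_isClique [DecidableEq V] (hK : G.IsClique (K : Set V)) (hx : x ∈ K)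
    (hy : y ∈ K) (hxy : G.Adj x y) :
    ∃ (b : V) (w : G.Walk y b), (w.cons hxy).IsPath ∧ (w.cons hxy).support.toFinset = K := by
  obtain ⟨b, w, hw, hsupp⟩ := exists_isPath_of_isClique (K := K.erase x)
    (hK.subset (by simp)) (mem_erase.2 ⟨hxy.ne', hy⟩)
  have hxw : x ∉ w.support := by simp [← List.mem_toFinset, hsupp]
  exact ⟨b, w, hw.cons hxw, by simp [hsupp, insert_erase hx]⟩

lemma card_le_maxPathLenAt_of_adj [Finite V] (hK : G.IsClique (K : Set V)) (hx : x ∈ K)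
    (hz : z ∉ K) (hzx : G.Adj z x) : #K ≤ maxPathLenAt G x := by
  classical
  obtain ⟨b, w, hw, rfl⟩ := exists_isPath_of_isClique hK hx
  rw [List.toFinset_card_of_nodup hw.support_nodup, w.length_support]
  exact length_le_maxPathLenAt (w := w.cons hzx) (hw.cons (by simpa using hz)) (by simp)

lemma card_le_maxPathLen_add_one [Finite V] (hK : G.IsClique (K : Set V)) (hx : x ∈ K)
    (hy : y ∈ K) (hxy : G.Adj x y) : #K ≤ maxPathLen G s(x, y) + 1 := by
  classical
  obtain ⟨b, w, hw, rfl⟩ := exists_isPath_cons_of_isClique hK hx hy hxy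
  rw [List.toFinset_card_of_nodup hw.support_nodup, Walk.length_support]
  exact Nat.succ_le_succ (length_le_maxPathLen hw (by simp))

lemma card_le_maxPathLen_of_adj [Finite V] (hK : G.IsClique (K : Set V)) (hx : x ∈ K)
    (hy : y ∈ K) (hxy : G.Adj x y) (hz : z ∉ K) (hzx : G.Adj z x) :
    #K ≤ maxPathLen G s(x, y) := by
  classical
  obtain ⟨b, w, hw, rfl⟩ := exists_isPath_cons_of_isClique hK hx hy hxy
  rw [List.toFinset_card_of_nodup hw.support_nodup, Walk.length_support]
  exact length_le_maxPathLen (w := (w.cons hxy).cons hzx) (hw.cons (by simpa using hz)) (by simp)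

end Clique

section LongestPath

variable {V : Type*} {G : SimpleGraph V} {u v x y : V} {w : G.Walk u v}

/-- A path that is at least as long as every other path of the graph. -/
def IsLongestPath (w : G.Walk u v) : Prop :=
  w.IsPath ∧ ∀ ⦃a b : V⦄ (q : G.Walk a b), q.IsPath → q.length ≤ w.length

lemma IsLongestPath.reverse (hw : IsLongestPath w) : IsLongestPath w.reverse :=
  ⟨hw.1.reverse, by simpa using hw.2⟩

lemma IsLongestPath.maxPathLenAt_eq [Finite V] (hw : IsLongestPath w) (hx : x ∈ w.support) :
    maxPathLenAt G x = w.length := by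
  obtain ⟨a, b, q, hq, -, hlen⟩ := exists_isPath_length_eq_maxPathLenAt G x
  exact (hlen ▸ hw.2 q hq).antisymm (length_le_maxPathLenAt hw.1 hx)

lemma IsLongestPath.mem_support_of_adj_start (hw : IsLongestPath w) (h : G.Adj u x) :
    x ∈ w.support := by
  by_contra hx
  simpa using hw.2 (w.cons h.symm) (hw.1.cons hx)

lemma IsLongestPath.mem_support_of_adj_end (hw : IsLongestPath w) (h : G.Adj v x) :
    x ∈ w.support := by
  simpa using hw.reverse.mem_support_of_adj_start h

lemma IsLongestPath.exists_dart_snd_eq (hw : IsLongestPath w) (h : G.Adj u x) :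
    ∃ d ∈ w.darts, d.snd = x := by
  simpa [← w.cons_map_snd_darts, h.ne'] using hw.mem_support_of_adj_start h

lemma IsLongestPath.exists_dart_fst_eq (hw : IsLongestPath w) (h : G.Adj v x) :
    ∃ d ∈ w.darts, d.fst = x := by
  simpa [← w.map_fst_darts_append, h.ne'] using hw.mem_support_of_adj_end h

-- Pósa's counting argument: the darts entering a neighbour of `u` and those leaving a neighbour
-- of `v` are too many to be disjoint.
lemma IsLongestPath.exists_crossing_dart (hw : IsLongestPath w)
    (hdeg : w.length < (G.neighborSet u).ncard + (G.neighborSet v).ncard) :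
    ∃ d ∈ w.darts, G.Adj u d.snd ∧ G.Adj v d.fst := by
  classical
  set A := {d ∈ w.darts.toFinset | G.Adj u d.snd} with hA
  set B := {d ∈ w.darts.toFinset | G.Adj v d.fst} with hB
  have ncard_start : (G.neighborSet u).ncard ≤ #A := by
    rw [← Set.ncard_coe_finset]
    refine (Set.ncard_le_ncard (t := (fun d ↦ d.snd) '' (A : Set G.Dart)) fun x hx ↦ ?_).trans
      (Set.ncard_image_le)
    obtain ⟨d, hd, rfl⟩ := hw.exists_dart_snd_eq hx
    exact ⟨d, by simp [hA, hd, (G.mem_neighborSet ..).1 hx], rfl⟩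
  have ncard_end : (G.neighborSet v).ncard ≤ #B := by
    rw [← Set.ncard_coe_finset]
    refine (Set.ncard_le_ncard (t := (fun d ↦ d.fst) '' (B : Set G.Dart)) fun x hx ↦ ?_).trans
      (Set.ncard_image_le)
    obtain ⟨d, hd, rfl⟩ := hw.exists_dart_fst_eq hx
    exact ⟨d, by simp [hB, hd, (G.mem_neighborSet ..).1 hx], rfl⟩
  have card_darts : #w.darts.toFinset ≤ w.length :=
    w.length_darts ▸ w.darts.toFinset_card_le
  obtain ⟨d, hd⟩ : (A ∩ B).Nonempty := by
    apply inter_nonempty_of_card_lt_card_add_card (filter_subset _ _) (filter_subset _ _)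
    lia
  simp only [hA, hB, mem_inter, mem_filter, List.mem_toFinset] at hd
  exact ⟨d, hd.1.1, hd.1.2, hd.2.2⟩

lemma IsLongestPath.exists_closed_walk (hw : IsLongestPath w)
    (hdeg : w.length < (G.neighborSet u).ncard + (G.neighborSet v).ncard) :
    ∃ c : G.Walk u u, c.support.tail.Nodup ∧ c.length = w.length + 1 := by
  obtain ⟨d, hd, hu, hv⟩ := hw.exists_crossing_dart hdeg
  obtain ⟨p, q, rfl⟩ := (Walk.isSubwalk_toWalk_adj_iff_mem_darts w).2 hd
  refine ⟨p.append ((q.reverse.concat hu.symm).cons hv.symm), ?_, ?_⟩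
  · have hnodup : (u :: p.support.tail ++ q.support).Nodup := by
      simpa [Walk.support_append] using hw.1.support_nodup
    have hperm : (p.support.tail ++ (q.support.reverse ++ [u])).Perm
        (u :: p.support.tail ++ q.support) := by
      rw [← List.append_assoc, List.cons_append]
      exact (List.perm_append_singleton ..).trans (.cons _ (.append_left _ (List.reverse_perm _)))
    simpa [Walk.tail_support_append] using hperm.nodup_iff.2 hnodup
  · simp only [Walk.length_append, Walk.length_cons, Walk.length_concat, Walk.length_reverse,
      Walk.length_nil]
    ring

lemma exists_isPath_of_closed_walk {c : G.Walk u u} (hc : c.support.tail.Nodup) (hnil : ¬c.Nil)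
    (hx : x ∈ c.support) :
    ∃ (y : V) (q : G.Walk y x), q.IsPath ∧ q.length + 1 = c.length ∧
      ∀ z, z ∈ q.support ↔ z ∈ c.support := by
  classical
  have hnodup : (c.rotate x hx).support.tail.Nodup :=
    (c.support_rotate x hx).perm.nodup_iff.2 hc
  have hlen := c.length_rotate x hx
  have hsupp (z : V) := c.mem_support_rotate_iff x (w := z) hx
  have hnil' : ¬(c.rotate x hx).Nil := by simpa using hnil
  cases hrot : c.rotate x hx with
  | nil => simp [hrot] at hnil'
  | cons h q =>
    simp only [hrot, Walk.support_cons, List.tail_cons, Walk.length_cons, List.mem_cons]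
      at hnodup hlen hsupp
    refine ⟨_, q, Walk.isPath_def q |>.2 hnodup, hlen, fun z ↦ ?_⟩
    rw [← hsupp z, or_iff_right_of_imp]
    rintro rfl
    exact q.end_mem_support

end LongestPath

section Decomposition

variable {V : Type*} {G : SimpleGraph V} {s : Set V} {T : Finset V} {u v x y : V}

lemma spanningCoe_induce_adj : (G.induce s).spanningCoe.Adj x y ↔ x ∈ s ∧ y ∈ s ∧ G.Adj x y := by
  simp [and_left_comm]

/-- `G` with the edges at `T` deleted. This is the graph `G - T`, except that the vertices of `T`
stay as isolated vertices, so that the vertex type does not change. -/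
abbrev isolate (G : SimpleGraph V) (T : Finset V) : SimpleGraph V :=
  (G.induce (T : Set V)ᶜ).spanningCoe

lemma isolate_lt (hx : x ∈ T) (hxy : G.Adj x y) : isolate G T < G :=
  (G.spanningCoe_induce_le _).lt_of_not_ge fun h ↦ (spanningCoe_induce_adj.1 (h hxy)).1 hx

/-- A nonempty set `T` of vertices that no edge leaves and each of whose vertices lies on a path
through all of `T`: in the terms of `maxPathLenAt`, a path with `#T - 1` edges. -/
structure IsTraceableBlock (G : SimpleGraph V) (T : Finset V) : Prop where
  nonempty : T.Nonempty
  mem_of_adj : ∀ ⦃x⦄, x ∈ T → ∀ ⦃y⦄, G.Adj x y → y ∈ T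
  card_eq : ∀ ⦃x⦄, x ∈ T → #T = maxPathLenAt G x + 1

lemma IsLongestPath.exists_adj_start [Finite V] {w : G.Walk u v} (hw : IsLongestPath w)
    (hlen : w.length ≠ 0) : ∃ x, G.Adj u x ∧ maxPathLenAt G x = maxPathLenAt G u := by
  cases w with
  | nil => simp at hlen
  | @cons _ x _ h q =>
    exact ⟨x, h, (hw.maxPathLenAt_eq (by simp)).trans (hw.maxPathLenAt_eq (by simp)).symm⟩

lemma IsLongestPath.isTraceableBlock [Finite V] [DecidableEq V] {w : G.Walk u v}
    (hw : IsLongestPath w) {c : G.Walk x x} (hc : c.support.tail.Nodup)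
    (hlen : c.length = w.length + 1) : IsTraceableBlock G c.support.toFinset := by
  have hnil : ¬c.Nil := by simp [← Walk.length_eq_zero_iff, hlen]
  have card_support : #c.support.toFinset = w.length + 1 := by
    obtain ⟨y, q, hq, hqlen, hsupp⟩ := exists_isPath_of_closed_walk hc hnil c.start_mem_support
    have : c.support.toFinset = q.support.toFinset := by ext z; simp [hsupp]
    rw [this, List.toFinset_card_of_nodup hq.support_nodup, q.length_support, hqlen, hlen]
  have longest_ending_at (z) (hz : z ∈ c.support) : ∃ (y : V) (q : G.Walk y z),
      IsLongestPath q ∧ q.length = w.length ∧ ∀ a, a ∈ q.support ↔ a ∈ c.support := by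
    obtain ⟨y, q, hq, hqlen, hsupp⟩ := exists_isPath_of_closed_walk hc hnil hz
    have hqw : q.length = w.length := by lia
    exact ⟨y, q, ⟨hq, hqw ▸ hw.2⟩, hqw, hsupp⟩
  refine ⟨⟨x, by simp⟩, fun z hz a hza ↦ ?_, fun z hz ↦ ?_⟩ <;>
    obtain ⟨y, q, hq, hqlen, hsupp⟩ := longest_ending_at z (List.mem_toFinset.1 hz)
  · exact List.mem_toFinset.2 ((hsupp a).1 (hq.mem_support_of_adj_end hza))
  · rw [card_support, hq.maxPathLenAt_eq q.end_mem_support, hqlen]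

lemma exists_adj_of_maxPathLenAt_ne_zero [Finite V] (h : maxPathLenAt G x ≠ 0) :
    ∃ y, G.Adj x y := by
  contrapose! h
  exact maxPathLenAt_eq_zero h

theorem exists_lowDegree_or_isTraceableBlock [Finite V] (hG : G ≠ ⊥) :
    (∃ v x, G.Adj v x ∧ maxPathLenAt G x = maxPathLenAt G v ∧
      2 * (G.neighborSet v).ncard ≤ maxPathLenAt G v) ∨
    ∃ T, IsTraceableBlock G T ∧ ∃ x ∈ T, ∃ y, G.Adj x y := by
  classical
  obtain ⟨a, b, hab⟩ := SimpleGraph.ne_bot_iff_exists_adj.1 hG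
  have : Nonempty V := ⟨a⟩
  obtain ⟨u, v, w, hw, hmax⟩ := Walk.exists_isPath_forall_isPath_length_le_length G
  replace hw : IsLongestPath w := ⟨hw, hmax⟩
  have hlen : 1 ≤ w.length := hw.2 hab.toWalk (by simp [hab.ne])
  have hPu := hw.maxPathLenAt_eq w.start_mem_support
  have hPv := hw.maxPathLenAt_eq w.end_mem_support
  by_cases hu : 2 * (G.neighborSet u).ncard ≤ w.length
  · obtain ⟨x, hux, hx⟩ := hw.exists_adj_start (by lia)
    exact .inl ⟨u, x, hux, hx, hPu ▸ hu⟩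
  by_cases hv : 2 * (G.neighborSet v).ncard ≤ w.length
  · obtain ⟨x, hvx, hx⟩ := hw.reverse.exists_adj_start (by rw [Walk.length_reverse]; lia)
    exact .inl ⟨v, x, hvx, hx, hPv ▸ hv⟩
  obtain ⟨c, hc, hclen⟩ := hw.exists_closed_walk (by lia)
  have block := hw.isTraceableBlock hc hclen
  have hu : u ∈ c.support.toFinset := by simp
  exact .inr ⟨_, block, u, hu, exists_adj_of_maxPathLenAt_ne_zero (by lia)⟩

theorem traceableBlock_induction [Finite V] {motive : SimpleGraph V → Prop} (bot : motive ⊥)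
    (vertex : ∀ (G : SimpleGraph V) (v x : V), G.Adj v x →
      maxPathLenAt G x = maxPathLenAt G v → 2 * (G.neighborSet v).ncard ≤ maxPathLenAt G v →
      motive (isolate G {v}) → motive G)
    (block : ∀ (G : SimpleGraph V) (T : Finset V), IsTraceableBlock G T →
      motive (isolate G T) → motive G)
    (G : SimpleGraph V) : motive G := by
  induction G using WellFoundedLT.induction with
  | _ G ih =>
    obtain rfl | hG := eq_or_ne G ⊥
    · exact bot
    obtain ⟨v, x, hvx, hx, hdeg⟩ | ⟨T, hT, x, hxT, y, hxy⟩ :=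
      exists_lowDegree_or_isTraceableBlock hG
    · exact vertex G v x hvx hx hdeg (ih _ (isolate_lt (by simp) hvx))
    · exact block G T hT (ih _ (isolate_lt hxT hxy))

end Decomposition

section VertexBound

variable {V : Type*} {G H : SimpleGraph V} {T K : Finset V} {n r : ℕ} {u v x : V}

/-- The total `∑ C(P(u), r)` over the vertices `u`, where `P(u)` is the maximum length of a path
through `u`. It is the right-hand side of the vertex version of the clique bound. -/
noncomputable def pathWeight [Fintype V] (G : SimpleGraph V) (r : ℕ) : ℕ :=
  ∑ u, (maxPathLenAt G u).choose r

/-- The vertex `u` lies in a clique that contains as many vertices as a longest path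
through `u`. -/
def IsCliqueTightAt (G : SimpleGraph V) (u : V) : Prop :=
  ∃ K, G.IsNClique (maxPathLenAt G u + 1) K ∧ u ∈ K

lemma cliqueCount_le_add_ncard_meeting [Finite V] (G : SimpleGraph V) (T : Finset V) (n : ℕ) :
    cliqueCount G n ≤ cliqueCount (isolate G T) n +
      {K | G.IsNClique n K ∧ ∃ u ∈ T, u ∈ K}.ncard := by
  refine (Set.ncard_le_ncard fun K hK ↦ ?_).trans (Set.ncard_union_le _ _)
  by_cases hmeet : ∃ u ∈ T, u ∈ K
  · exact .inr ⟨hK, hmeet⟩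
  · push Not at hmeet
    refine .inl ⟨fun x hx y hy hxy ↦ ?_, hK.card_eq⟩
    exact spanningCoe_induce_adj.2
      ⟨fun h ↦ hmeet x h hx, fun h ↦ hmeet y h hy, hK.isClique hx hy hxy⟩

lemma IsCliqueTightAt.of_le (hHG : H ≤ G) (hP : maxPathLenAt H u = maxPathLenAt G u)
    (h : IsCliqueTightAt H u) : IsCliqueTightAt G u := by
  obtain ⟨K, hK, hu⟩ := h
  exact ⟨K, hP ▸ hK.mono hHG, hu⟩

lemma subset_of_isClique_spanningCoe_induce {s : Set V}
    (hK : (G.induce s).spanningCoe.IsClique (K : Set V)) (hcard : 2 ≤ #K) : (K : Set V) ⊆ s := by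
  intro x hx
  obtain ⟨y, hy, hyx⟩ := exists_mem_ne hcard x
  exact (spanningCoe_induce_adj.1 (hK hx hy hyx.symm)).1

lemma pathWeight_eq_sum [Fintype V] (hr : 1 ≤ r) (h : ∀ u ∉ T, ∀ v, ¬G.Adj u v) :
    pathWeight G r = ∑ u ∈ T, (maxPathLenAt G u).choose r := by
  refine (sum_subset (subset_univ _) fun u _ hu ↦ ?_).symm
  rw [maxPathLenAt_eq_zero (h u hu), Nat.choose_eq_zero_of_lt hr]

section Isolate

variable [Fintype V]

lemma pathWeight_isolate [DecidableEq V] (hr : 1 ≤ r) (G : SimpleGraph V) (T : Finset V) :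
    pathWeight (isolate G T) r =
      ∑ u ∈ Tᶜ, (maxPathLenAt (isolate G T) u).choose r :=
  pathWeight_eq_sum hr fun u hu v h ↦ (spanningCoe_induce_adj.1 h).1 (by simpa using hu)

lemma pathWeight_isolate_add_sum_le (hr : 1 ≤ r) (G : SimpleGraph V) (T : Finset V) :
    pathWeight (isolate G T) r + ∑ u ∈ T, (maxPathLenAt G u).choose r ≤
      pathWeight G r := by
  classical
  rw [pathWeight_isolate hr, pathWeight, ← sum_compl_add_sum T]
  gcongr
  exact maxPathLenAt_mono (G.spanningCoe_induce_le _) _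

lemma maxPathLenAt_isolate_eq (hr : 1 ≤ r)
    (h : pathWeight (isolate G T) r +
      ∑ u ∈ T, (maxPathLenAt G u).choose r = pathWeight G r) (hu : u ∉ T)
    (hru : r ≤ maxPathLenAt G u) :
    maxPathLenAt (isolate G T) u = maxPathLenAt G u := by
  classical
  have hmono (x : V) := maxPathLenAt_mono (G.spanningCoe_induce_le (T : Set V)ᶜ) x
  rw [pathWeight_isolate hr, pathWeight, ← sum_compl_add_sum T,
    add_left_inj, sum_eq_sum_iff_of_le fun x _ ↦ Nat.choose_le_choose r (hmono x)] at h
  exact eq_of_choose_eq_choose hr (hmono u) hru (h u (mem_compl.2 hu))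

lemma succ_mul_cliqueCount_le_of_isolate (hr : 1 ≤ r)
    (hisolate : (r + 1) * cliqueCount (isolate G T) (r + 1) ≤ pathWeight (isolate G T) r)
    (hmeeting : (r + 1) * {K | G.IsNClique (r + 1) K ∧ ∃ u ∈ T, u ∈ K}.ncard ≤
      ∑ u ∈ T, (maxPathLenAt G u).choose r) :
    (r + 1) * cliqueCount G (r + 1) ≤ pathWeight G r :=
  calc (r + 1) * cliqueCount G (r + 1)
      ≤ (r + 1) * cliqueCount (isolate G T) (r + 1) +
          (r + 1) * {K | G.IsNClique (r + 1) K ∧ ∃ u ∈ T, u ∈ K}.ncard := by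
        rw [← mul_add]
        gcongr
        exact cliqueCount_le_add_ncard_meeting G T (r + 1)
    _ ≤ _ := add_le_add hisolate hmeeting
    _ ≤ pathWeight G r := pathWeight_isolate_add_sum_le hr G T

lemma isolate_eq_of_succ_mul_cliqueCount_eq (hr : 1 ≤ r)
    (hisolate : (r + 1) * cliqueCount (isolate G T) (r + 1) ≤ pathWeight (isolate G T) r)
    (hmeeting : (r + 1) * {K | G.IsNClique (r + 1) K ∧ ∃ u ∈ T, u ∈ K}.ncard ≤
      ∑ u ∈ T, (maxPathLenAt G u).choose r)
    (heq : (r + 1) * cliqueCount G (r + 1) = pathWeight G r) :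
    (r + 1) * cliqueCount (isolate G T) (r + 1) = pathWeight (isolate G T) r ∧
      (r + 1) * {K | G.IsNClique (r + 1) K ∧ ∃ u ∈ T, u ∈ K}.ncard =
        ∑ u ∈ T, (maxPathLenAt G u).choose r ∧
      ∀ u ∉ T, r ≤ maxPathLenAt G u → maxPathLenAt (isolate G T) u = maxPathLenAt G u := by
  have hcount := Nat.mul_le_mul_left (r + 1) (cliqueCount_le_add_ncard_meeting G T (r + 1))
  have hweight := pathWeight_isolate_add_sum_le hr G T
  rw [mul_add] at hcount
  exact ⟨by lia, by lia, fun u ↦ maxPathLenAt_isolate_eq hr (by lia)⟩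

end Isolate

lemma ncard_isNClique_mem_le_choose [Finite V] (G : SimpleGraph V) (v : V) (r : ℕ) :
    {K | G.IsNClique (r + 1) K ∧ v ∈ K}.ncard ≤ (G.neighborSet v).ncard.choose r := by
  classical
  have := Fintype.ofFinite V
  rw [Set.ncard_eq_toFinset_card' (G.neighborSet v), ← card_powersetCard, ← Set.ncard_coe_finset]
  refine Set.ncard_le_ncard_of_injOn (·.erase v) (fun K hK ↦ ?_)
    ((erase_injOn' v).mono fun K hK ↦ hK.2)
  obtain ⟨hK, hv⟩ := hK
  refine mem_powersetCard.2 ⟨fun x hx ↦ ?_, by rw [card_erase_of_mem hv, hK.card_eq]; rfl⟩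
  simpa using hK.isClique hv (mem_of_mem_erase hx) (ne_of_mem_erase hx).symm

lemma succ_mul_ncard_meeting_singleton_le [Finite V] (G : SimpleGraph V) (v : V) (r : ℕ) :
    (r + 1) * {K | G.IsNClique (r + 1) K ∧ ∃ u ∈ ({v} : Finset V), u ∈ K}.ncard ≤
      (r + 1) * (G.neighborSet v).ncard.choose r := by
  simp only [mem_singleton, exists_eq_left]
  exact Nat.mul_le_mul_left _ (ncard_isNClique_mem_le_choose G v r)

lemma IsTraceableBlock.subset_of_isClique (hT : IsTraceableBlock G T)
    (hK : G.IsClique (K : Set V)) (hmeet : ∃ u ∈ T, u ∈ K) : K ⊆ T := by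
  obtain ⟨u, huT, huK⟩ := hmeet
  intro x hx
  obtain rfl | hux := eq_or_ne u x
  · exact huT
  · exact hT.mem_of_adj huT (hK huK hx hux)

lemma IsTraceableBlock.setOf_meeting_subset (hT : IsTraceableBlock G T) (n : ℕ) :
    {K | G.IsNClique n K ∧ ∃ u ∈ T, u ∈ K} ⊆ (T.powersetCard n : Set (Finset V)) := fun _ hK ↦
  mem_powersetCard.2 ⟨hT.subset_of_isClique hK.1.isClique hK.2, hK.1.card_eq⟩

lemma IsTraceableBlock.sum_choose (hT : IsTraceableBlock G T) (r : ℕ) :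
    ∑ u ∈ T, (maxPathLenAt G u).choose r = (r + 1) * (#T).choose (r + 1) := by
  obtain ⟨m, hm⟩ := Nat.exists_eq_add_of_le' hT.nonempty.card_pos
  have hP : ∀ u ∈ T, (maxPathLenAt G u).choose r = m.choose r := fun u hu ↦ by
    rw [show maxPathLenAt G u = m by have := hT.card_eq hu; lia]
  rw [sum_congr rfl hP, sum_const, smul_eq_mul, hm, Nat.add_one_mul_choose_eq, mul_comm]

lemma IsTraceableBlock.succ_mul_ncard_meeting_le (hT : IsTraceableBlock G T) (r : ℕ) :
    (r + 1) * {K | G.IsNClique (r + 1) K ∧ ∃ u ∈ T, u ∈ K}.ncard ≤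
      ∑ u ∈ T, (maxPathLenAt G u).choose r := by
  rw [hT.sum_choose, ← card_powersetCard, ← Set.ncard_coe_finset]
  gcongr
  · exact finite_toSet _
  · exact hT.setOf_meeting_subset _

lemma IsTraceableBlock.isClique (hT : IsTraceableBlock G T) (hr : 1 ≤ r) (hrT : r + 1 ≤ #T)
    (h : (r + 1) * {K | G.IsNClique (r + 1) K ∧ ∃ u ∈ T, u ∈ K}.ncard =
      ∑ u ∈ T, (maxPathLenAt G u).choose r) : G.IsClique (T : Set V) := by
  classical
  rw [hT.sum_choose, ← card_powersetCard, ← Set.ncard_coe_finset] at h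
  have all_subsets := Set.eq_of_subset_of_ncard_le (hT.setOf_meeting_subset _)
    (Nat.le_of_mul_le_mul_left h.ge r.succ_pos) (finite_toSet _)
  intro x hx y hy hxy
  obtain ⟨K, hxyK, hKT, hK⟩ := exists_subsuperset_card_eq (s := {x, y}) (t := T) (n := r + 1)
    (by simp_all [insert_subset_iff]) (by simp [hxy]; lia) hrT
  have hclique : K ∈ {K | G.IsNClique (r + 1) K ∧ ∃ u ∈ T, u ∈ K} :=
    all_subsets ▸ mem_powersetCard.2 ⟨hKT, hK⟩
  exact hclique.1.isClique (hxyK (by simp)) (hxyK (by simp)) hxy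

lemma cliqueCount_bot (hn : 2 ≤ n) : cliqueCount (⊥ : SimpleGraph V) n = 0 := by
  have : {K : Finset V | (⊥ : SimpleGraph V).IsNClique n K} = ∅ :=
    Set.eq_empty_of_forall_notMem fun K hK ↦ cliqueFree_bot hn K hK
  rw [cliqueCount, this, Set.ncard_empty]

lemma not_isCliqueTightAt_isolate_of_adj [Finite V] (hvx : G.Adj v x) (hpos : maxPathLenAt G x ≠ 0)
    (hP : maxPathLenAt (isolate G {v}) x = maxPathLenAt G x) :
    ¬IsCliqueTightAt (isolate G {v}) x := by
  rintro ⟨K, hK, hxK⟩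
  have hvK : v ∉ K := fun hv ↦
    subset_of_isClique_spanningCoe_induce hK.isClique (by rw [hK.card_eq]; lia) hv (by simp)
  have := card_le_maxPathLenAt_of_adj
    (hK.isClique.mono (G.spanningCoe_induce_le _)) hxK hvK hvx
  rw [hK.card_eq] at this
  lia

section Bound

variable [Fintype V]

theorem succ_mul_cliqueCount_le_pathWeight (hr : 1 ≤ r) (G : SimpleGraph V) :
    (r + 1) * cliqueCount G (r + 1) ≤ pathWeight G r := by
  classical
  induction G using traceableBlock_induction with
  | bot => simp [cliqueCount_bot (Nat.succ_le_succ hr)]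
  | vertex G v _ _ _ hdeg ih =>
    refine succ_mul_cliqueCount_le_of_isolate hr ih ?_
    rw [sum_singleton]
    exact (succ_mul_ncard_meeting_singleton_le G v r).trans (succ_mul_choose_le_choose hdeg r)
  | block G T hT ih =>
    exact succ_mul_cliqueCount_le_of_isolate hr ih (hT.succ_mul_ncard_meeting_le r)

theorem isCliqueTightAt_of_succ_mul_cliqueCount_eq (hr : 1 ≤ r)
    (heq : (r + 1) * cliqueCount G (r + 1) = pathWeight G r) (hu : r ≤ maxPathLenAt G u) :
    IsCliqueTightAt G u := by
  classical
  induction G using traceableBlock_induction generalizing u with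
  | bot => simp [maxPathLenAt_eq_zero (G := (⊥ : SimpleGraph V)) (u := u)] at hu; lia
  | vertex G v x hvx hx hdeg ih =>
    have hmeeting_le := succ_mul_ncard_meeting_singleton_le G v r
    obtain ⟨hH, hmeeting, hP⟩ := isolate_eq_of_succ_mul_cliqueCount_eq hr
      (succ_mul_cliqueCount_le_pathWeight hr _)
      (hmeeting_le.trans (by simpa using succ_mul_choose_le_choose hdeg r)) heq
    rw [hmeeting, sum_singleton] at hmeeting_le
    -- The bound for low-degree vertices is strict if `r ≥ 2`; for `r = 1` it is the neighbour `x`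
    -- of `v` that cannot be tight once `v` is isolated.
    have hPv : maxPathLenAt G v < r := by
      by_contra! hrv
      obtain rfl : r = 1 := by
        by_contra hr1
        exact hmeeting_le.not_gt (succ_mul_choose_lt_choose hdeg (by lia) hrv)
      have hPx := hP x (by simpa using hvx.ne') (hx ▸ hrv)
      exact not_isCliqueTightAt_isolate_of_adj hvx (by lia) hPx (ih hH (by lia))
    have hPu := hP u (by rw [mem_singleton]; rintro rfl; lia) hu
    exact (ih hH (hPu ▸ hu)).of_le (G.spanningCoe_induce_le _) hPu
  | block G T hT ih =>
    obtain ⟨hH, hmeeting, hP⟩ := isolate_eq_of_succ_mul_cliqueCount_eq hr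
      (succ_mul_cliqueCount_le_pathWeight hr _) (hT.succ_mul_ncard_meeting_le r) heq
    by_cases huT : u ∈ T
    · have hcard := hT.card_eq huT
      exact ⟨T, ⟨hT.isClique hr (by lia) hmeeting, hcard⟩, huT⟩
    · exact (ih hH (hP u huT hu ▸ hu)).of_le (G.spanningCoe_induce_le _) (hP u huT hu)

end Bound

end VertexBound

section DoubleCounting

variable {V : Type*} {G : SimpleGraph V} {n c : ℕ}

lemma sum_ncard_isNClique_eq_mul_cliqueCount [Finite V] {ι : Type*} {s : Finset ι}
    {R : ι → Finset V → Prop} [∀ i K, Decidable (R i K)]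
    (h : ∀ K, G.IsNClique n K → #{i ∈ s | R i K} = c) :
    ∑ i ∈ s, {K | G.IsNClique n K ∧ R i K}.ncard = c * cliqueCount G n := by
  classical
  have := Fintype.ofFinite V
  have filter_eq (i : ι) : {K | G.IsNClique n K ∧ R i K}.ncard =
      #((G.cliqueFinset n).bipartiteAbove R i) := by
    rw [← Set.ncard_coe_finset]
    congr 1
    ext K
    simp [bipartiteAbove]
  calc ∑ i ∈ s, {K | G.IsNClique n K ∧ R i K}.ncard
      = ∑ i ∈ s, #((G.cliqueFinset n).bipartiteAbove R i) := sum_congr rfl fun i _ ↦ filter_eq i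
    _ = ∑ K ∈ G.cliqueFinset n, #(s.bipartiteBelow R K) :=
        sum_card_bipartiteAbove_eq_sum_card_bipartiteBelow R
    _ = ∑ _ ∈ G.cliqueFinset n, c := sum_congr rfl fun _ hK ↦ h _ (mem_cliqueFinset_iff.1 hK)
    _ = c * cliqueCount G n := by
        rw [sum_const, smul_eq_mul, mul_comm, cliqueCount, ← Set.ncard_coe_finset]
        congr 2
        ext K
        simp

variable [Fintype V]

lemma sum_ncard_isNClique_mem (G : SimpleGraph V) (n : ℕ) :
    ∑ v, {K | G.IsNClique n K ∧ v ∈ K}.ncard = n * cliqueCount G n := by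
  classical
  exact sum_ncard_isNClique_eq_mul_cliqueCount fun K hK ↦ by simp [hK.card_eq]

variable (G) [DecidableRel G.Adj]

lemma sum_ncard_isNClique_mem_sym2 (n : ℕ) :
    ∑ e ∈ G.edgeFinset, {K | G.IsNClique n K ∧ e ∈ K.sym2}.ncard =
      n.choose 2 * cliqueCount G n := by
  classical
  refine sum_ncard_isNClique_eq_mul_cliqueCount fun K hK ↦ ?_
  rw [← hK.card_eq, ← Sym2.card_image_offDiag]
  congr 1
  ext e
  induction e with | _ x y
  simp only [mem_filter, mem_edgeFinset, mem_edgeSet, mk_mem_sym2_iff, mem_image, mem_offDiag]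
  constructor
  · rintro ⟨hxy, hx, hy⟩
    exact ⟨(x, y), ⟨hx, hy, hxy.ne⟩, rfl⟩
  · rintro ⟨⟨a, b⟩, ⟨ha, hb, hab⟩, heq⟩
    have hadj := hK.isClique ha hb hab
    obtain ⟨rfl, rfl⟩ | ⟨rfl, rfl⟩ := Sym2.eq_iff.1 heq
    · exact ⟨hadj, ha, hb⟩
    · exact ⟨hadj.symm, hb, ha⟩

lemma sum_sum_neighborFinset (f : Sym2 V → ℕ) :
    ∑ v, ∑ u ∈ G.neighborFinset v, f s(v, u) = 2 * ∑ e ∈ G.edgeFinset, f e := by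
  classical
  calc ∑ v, ∑ u ∈ G.neighborFinset v, f s(v, u)
      = ∑ d : G.Dart, f d.edge := by
        rw [sum_sigma']
        exact sum_bij' (fun p hp ↦ ⟨(p.1, p.2), by simpa using hp⟩) (fun d _ ↦ ⟨d.fst, d.snd⟩)
          (by simp) (fun d _ ↦ by simp) (by simp) (by simp) (by simp [Dart.edge])
    _ = ∑ e ∈ G.edgeFinset, ∑ d : G.Dart with d.edge = e, f d.edge :=
        (sum_fiberwise_of_maps_to (fun d _ ↦ by simp) _).symm
    _ = ∑ e ∈ G.edgeFinset, 2 * f e := sum_congr rfl fun e he ↦ by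
        rw [sum_congr rfl fun d hd ↦ by rw [(mem_filter.1 hd).2], sum_const,
          G.dart_edge_fiber_card e (mem_edgeFinset.1 he), smul_eq_mul]
    _ = 2 * ∑ e ∈ G.edgeFinset, f e := (mul_sum ..).symm

end DoubleCounting

section Link

variable {V : Type*} {G : SimpleGraph V} {n r : ℕ} {a b u v : V}

/-- The link of `v`: the neighbours of `v` with the edges of `G` between them. The other vertices
are kept as isolated vertices. -/
abbrev link (G : SimpleGraph V) (v : V) : SimpleGraph V :=
  (G.induce (G.neighborSet v)).spanningCoe

lemma ncard_isNClique_mem_le_cliqueCount_link [Finite V] (G : SimpleGraph V) (v : V) (n : ℕ) :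
    {K | G.IsNClique (n + 1) K ∧ v ∈ K}.ncard ≤ cliqueCount (link G v) n := by
  classical
  refine Set.ncard_le_ncard_of_injOn (·.erase v) (fun K hK ↦ ?_)
    ((erase_injOn' v).mono fun K hK ↦ hK.2)
  obtain ⟨hK, hv⟩ := hK
  have adj_of_mem {x : V} (hx : x ∈ K.erase v) : G.Adj v x :=
    hK.isClique hv (mem_of_mem_erase hx) (ne_of_mem_erase hx).symm
  refine ⟨fun x hx y hy hxy ↦ spanningCoe_induce_adj.2 ⟨adj_of_mem hx, adj_of_mem hy, ?_⟩, ?_⟩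
  · exact hK.isClique (mem_of_mem_erase hx) (mem_of_mem_erase hy) hxy
  · rw [card_erase_of_mem hv, hK.card_eq]; rfl

lemma mem_of_mem_support_spanningCoe_induce {s : Set V} {x : V}
    (w : (G.induce s).spanningCoe.Walk a b) (hu : u ∈ w.support) (hus : u ∈ s)
    (hx : x ∈ w.support) : x ∈ s := by
  by_cases hnil : w.Nil
  · rw [Walk.nil_iff_support_eq.1 hnil, List.mem_singleton] at hu hx
    exact hx ▸ hu ▸ hus
  · obtain ⟨e, he, hxe⟩ := (Walk.mem_support_iff_exists_mem_edges_of_not_nil hnil).1 hx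
    obtain ⟨y, rfl⟩ := Sym2.mem_iff_exists.1 hxe
    exact (spanningCoe_induce_adj.1 (w.adj_of_mem_edges he)).1

lemma exists_isPath_insert {w : G.Walk a b} (hw : w.IsPath) (hu : u ∈ w.support)
    (hv : v ∉ w.support) (hadj : ∀ x ∈ w.support, G.Adj v x) :
    ∃ (a' b' : V) (q : G.Walk a' b'),
      q.IsPath ∧ s(v, u) ∈ q.edges ∧ q.length = w.length + 1 := by
  obtain ⟨p, q, rfl⟩ := Walk.mem_support_iff_exists_append.1 hu
  cases q with
  | nil =>
    rw [Walk.append_nil] at hw hv ⊢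
    exact ⟨a, v, p.concat (hadj _ hu).symm, hw.concat hv _, by simp [Sym2.eq_swap], by simp⟩
  | cons h q =>
    rw [Walk.isPath_def] at hw
    rw [Walk.support_append, Walk.support_cons, List.tail_cons] at hw hv
    refine ⟨a, b, p.append ((q.cons (hadj _ (by simp))).cons (hadj _ hu).symm), ?_, ?_, ?_⟩
    · rw [Walk.isPath_def, Walk.support_append, Walk.support_cons, List.tail_cons,
        Walk.support_cons, List.nodup_middle]
      exact List.nodup_cons.2 ⟨hv, hw⟩
    · simp [Sym2.eq_swap]
    · simp only [Walk.length_append, Walk.length_cons]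
      ring

lemma maxPathLenAt_link_add_one_le [Finite V] (h : G.Adj v u) :
    maxPathLenAt (link G v) u + 1 ≤ maxPathLen G s(v, u) := by
  obtain ⟨a, b, w, hw, hu, hlen⟩ := exists_isPath_length_eq_maxPathLenAt (link G v) u
  have hsupp (x : V) (hx : x ∈ w.support) : G.Adj v x :=
    mem_of_mem_support_spanningCoe_induce w hu h hx
  have hv : v ∉ w.support := fun hv ↦ G.irrefl (hsupp v hv)
  obtain ⟨a', b', q, hq, he, hqlen⟩ := exists_isPath_insert
    (hw.mapLe (G.spanningCoe_induce_le _)) (u := u) (v := v) (by simpa) (by simpa) (by simpa)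
  rw [Walk.length_mapLe] at hqlen
  exact hlen ▸ hqlen ▸ length_le_maxPathLen hq he

lemma pathWeight_link [Fintype V] [DecidableRel G.Adj] (hr : 1 ≤ r) (v : V) :
    pathWeight (link G v) r = ∑ u ∈ G.neighborFinset v, (maxPathLenAt (link G v) u).choose r :=
  pathWeight_eq_sum hr fun u hu x h ↦ hu (by simpa using (spanningCoe_induce_adj.1 h).1)

lemma pathWeight_link_le [Fintype V] [DecidableRel G.Adj] (hr : 1 ≤ r) (v : V) :
    pathWeight (link G v) r ≤
      ∑ u ∈ G.neighborFinset v, (maxPathLen G s(v, u) - 1).choose r := by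
  rw [pathWeight_link hr]
  refine sum_le_sum fun u hu ↦ Nat.choose_le_choose r ?_
  exact Nat.le_sub_one_of_lt (maxPathLenAt_link_add_one_le ((G.mem_neighborFinset ..).1 hu))

lemma succ_mul_ncard_isNClique_mem_le [Fintype V] [DecidableRel G.Adj] (hr : 1 ≤ r) (v : V) :
    (r + 1) * {K | G.IsNClique (r + 2) K ∧ v ∈ K}.ncard ≤
      ∑ u ∈ G.neighborFinset v, (maxPathLen G s(v, u) - 1).choose r :=
  calc (r + 1) * {K | G.IsNClique (r + 2) K ∧ v ∈ K}.ncard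
      ≤ (r + 1) * cliqueCount (link G v) (r + 1) :=
        Nat.mul_le_mul_left _ (ncard_isNClique_mem_le_cliqueCount_link G v (r + 1))
    _ ≤ pathWeight (link G v) r := succ_mul_cliqueCount_le_pathWeight hr _
    _ ≤ _ := pathWeight_link_le hr v

end Link

section EdgeBound

variable {V : Type*} {G : SimpleGraph V} {e : Sym2 V} {n r : ℕ} {a b u v x y : V}

/-- The edge `e` lies in a clique that contains as many vertices as a longest path through `e`. -/
def IsCliqueTight (G : SimpleGraph V) (e : Sym2 V) : Prop :=
  ∃ K, G.IsNClique (maxPathLen G e + 1) K ∧ e ∈ K.sym2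

lemma IsCliqueTightAt.isCliqueTight_of_link (hpos : maxPathLenAt (link G v) u ≠ 0)
    (heq : maxPathLenAt (link G v) u + 1 = maxPathLen G s(v, u))
    (htight : IsCliqueTightAt (link G v) u) : IsCliqueTight G s(v, u) := by
  classical
  obtain ⟨K, hK, hu⟩ := htight
  have hKv : (K : Set V) ⊆ G.neighborSet v :=
    subset_of_isClique_spanningCoe_induce hK.isClique (by rw [hK.card_eq]; lia)
  refine ⟨insert v K, ?_, by simp [hu]⟩
  rw [← heq]
  exact (hK.mono (G.spanningCoe_induce_le _)).insert fun x hx ↦ hKv hx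

lemma IsCliqueTight.choose_le_ncard [Finite V] (h : IsCliqueTight G e) (he : ¬e.IsDiag) (r : ℕ) :
    (maxPathLen G e - 1).choose r ≤ {K | G.IsNClique (r + 2) K ∧ e ∈ K.sym2}.ncard := by
  classical
  obtain ⟨K, hK, heK⟩ := h
  have hsub : e.toFinset ⊆ K := fun x hx ↦ mem_sym2_iff.1 heK x (Sym2.mem_toFinset.1 hx)
  have card_e : #e.toFinset = 2 := Sym2.card_toFinset_of_not_isDiag e he
  have count := card_filter_powersetCard_subset e.toFinset K (r + 2) hsub (by lia)
  rw [hK.card_eq, card_e] at count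
  calc (maxPathLen G e - 1).choose r
      = #{L ∈ K.powersetCard (r + 2) | e.toFinset ⊆ L} := by rw [count]; congr 1
    _ ≤ {K | G.IsNClique (r + 2) K ∧ e ∈ K.sym2}.ncard := by
        rw [← Set.ncard_coe_finset]
        refine Set.ncard_le_ncard fun L hL ↦ ?_
        rw [mem_coe, mem_filter, mem_powersetCard] at hL
        refine ⟨⟨hK.isClique.subset (mod_cast hL.1.1), hL.1.2⟩, ?_⟩
        exact mem_sym2_iff.2 fun x hx ↦ hL.2 (Sym2.mem_toFinset.2 hx)

lemma two_mul_choose_two_mul_cliqueCount [Fintype V] (G : SimpleGraph V) (r : ℕ) :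
    2 * ((r + 2).choose 2 * cliqueCount G (r + 2)) =
      ∑ v, (r + 1) * {K | G.IsNClique (r + 2) K ∧ v ∈ K}.ncard := by
  classical
  have hchoose := Nat.add_one_mul_choose_eq (r + 1) 1
  rw [Nat.choose_one_right] at hchoose
  rw [← mul_sum, sum_ncard_isNClique_mem, ← mul_assoc, ← mul_assoc, mul_comm 2, ← hchoose,
    mul_comm (r + 1 + 1)]

variable [Fintype V] [DecidableRel G.Adj]

theorem choose_two_mul_cliqueCount_le (hr : 1 ≤ r) :
    (r + 2).choose 2 * cliqueCount G (r + 2) ≤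
      ∑ e ∈ G.edgeFinset, (maxPathLen G e - 1).choose r := by
  refine Nat.le_of_mul_le_mul_left ?_ two_pos
  rw [two_mul_choose_two_mul_cliqueCount, ← sum_sum_neighborFinset]
  exact sum_le_sum fun v _ ↦ succ_mul_ncard_isNClique_mem_le hr v

theorem isCliqueTight_of_choose_two_mul_cliqueCount_eq (hr : 1 ≤ r)
    (heq : (r + 2).choose 2 * cliqueCount G (r + 2) =
      ∑ e ∈ G.edgeFinset, (maxPathLen G e - 1).choose r)
    (huv : G.Adj u v) (hlen : r + 1 ≤ maxPathLen G s(u, v)) : IsCliqueTight G s(u, v) := by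
  have heq_at : (r + 1) * {K | G.IsNClique (r + 2) K ∧ u ∈ K}.ncard =
      ∑ x ∈ G.neighborFinset u, (maxPathLen G s(u, x) - 1).choose r := by
    have := congrArg (2 * ·) heq
    simp only [two_mul_choose_two_mul_cliqueCount, ← sum_sum_neighborFinset] at this
    rw [sum_eq_sum_iff_of_le fun x _ ↦ succ_mul_ncard_isNClique_mem_le hr x] at this
    exact this u (mem_univ u)
  have hcount := Nat.mul_le_mul_left (r + 1) (ncard_isNClique_mem_le_cliqueCount_link G u (r + 1))
  have hlink := succ_mul_cliqueCount_le_pathWeight hr (link G u)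
  have hweight := pathWeight_link_le hr u (G := G)
  have weight_eq : pathWeight (link G u) r =
      ∑ x ∈ G.neighborFinset u, (maxPathLen G s(u, x) - 1).choose r := by lia
  have hle (x : V) (hx : x ∈ G.neighborFinset u) :
      maxPathLenAt (link G u) x ≤ maxPathLen G s(u, x) - 1 :=
    Nat.le_sub_one_of_lt (maxPathLenAt_link_add_one_le ((G.mem_neighborFinset ..).1 hx))
  rw [pathWeight_link hr, sum_eq_sum_iff_of_le fun x hx ↦ Nat.choose_le_choose r (hle x hx)]
    at weight_eq
  have hv : v ∈ G.neighborFinset u := (G.mem_neighborFinset ..).2 huv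
  have len_eq := eq_of_choose_eq_choose hr (hle v hv) (by lia) (weight_eq v hv)
  have htight : IsCliqueTightAt (link G u) v :=
    isCliqueTightAt_of_succ_mul_cliqueCount_eq hr (by lia) (by lia)
  exact htight.isCliqueTight_of_link (by lia) (by lia)

theorem choose_two_mul_cliqueCount_eq_of_forall_isCliqueTight (hr : 1 ≤ r)
    (h : ∀ u v, G.Adj u v → r + 1 ≤ maxPathLen G s(u, v) → IsCliqueTight G s(u, v)) :
    (r + 2).choose 2 * cliqueCount G (r + 2) =
      ∑ e ∈ G.edgeFinset, (maxPathLen G e - 1).choose r := by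
  refine (choose_two_mul_cliqueCount_le hr).antisymm ?_
  rw [← sum_ncard_isNClique_mem_sym2]
  refine sum_le_sum fun e he ↦ ?_
  induction e with | _ u v
  rw [mem_edgeFinset, mem_edgeSet] at he
  obtain hlt | hle := lt_or_ge (maxPathLen G s(u, v)) (r + 1)
  · rw [Nat.choose_eq_zero_of_lt (by have := one_le_maxPathLen he; lia)]
    exact Nat.zero_le _
  · exact (h u v he hle).choose_le_ncard (by simpa using he.ne) r

theorem choose_two_mul_cliqueCount_eq_iff (hr : 1 ≤ r) :
    (r + 2).choose 2 * cliqueCount G (r + 2) =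
        ∑ e ∈ G.edgeFinset, (maxPathLen G e - 1).choose r ↔
      ∀ u v, G.Adj u v → r + 1 ≤ maxPathLen G s(u, v) → IsCliqueTight G s(u, v) :=
  ⟨fun heq _ _ ↦ isCliqueTight_of_choose_two_mul_cliqueCount_eq hr heq,
    choose_two_mul_cliqueCount_eq_of_forall_isCliqueTight hr⟩

end EdgeBound

section LongPathGraph

variable {V : Type*} {G : SimpleGraph V} {m : ℕ} {a b u v x y z : V}

/-- The graph `G ∖ Z`, where `Z` is the set of edges that lie on no path of length `m` or
more. -/
abbrev longPathGraph (G : SimpleGraph V) (m : ℕ) : SimpleGraph V :=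
  G.deleteEdges {e | e ∈ G.edgeSet ∧ maxPathLen G e < m}

lemma longPathGraph_adj :
    (longPathGraph G m).Adj x y ↔ G.Adj x y ∧ m ≤ maxPathLen G s(x, y) := by
  rw [deleteEdges_adj, Set.mem_ofPred_eq, mem_edgeSet, not_and, not_lt]
  exact and_congr_right fun h ↦ forall_prop_of_true h

lemma IsCliqueTight.adj_and_maxPathLen_le [Finite V] (h : IsCliqueTight G s(x, y))
    (hxy : G.Adj x y) (hyz : G.Adj y z) (hxz : x ≠ z) :
    G.Adj x z ∧ maxPathLen G s(x, y) ≤ maxPathLen G s(x, z) := by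
  obtain ⟨K, hK, hmem⟩ := h
  obtain ⟨hx, hy⟩ := mk_mem_sym2_iff.1 hmem
  have hz : z ∈ K := by
    by_contra hz
    have := card_le_maxPathLen_of_adj hK.isClique hy hx hxy.symm hz hyz.symm
    rw [hK.card_eq, Sym2.eq_swap] at this
    exact Nat.not_succ_le_self _ this
  have hadj : G.Adj x z := hK.isClique hx hz hxz
  have := card_le_maxPathLen_add_one hK.isClique hx hz hadj
  rw [hK.card_eq] at this
  exact ⟨hadj, Nat.le_of_succ_le_succ this⟩

lemma longPathGraph_eq_or_adj_of_reachable [Finite V]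
    (h : ∀ u v, G.Adj u v → m ≤ maxPathLen G s(u, v) → IsCliqueTight G s(u, v))
    (huv : (longPathGraph G m).Reachable u v) : u = v ∨ (longPathGraph G m).Adj u v := by
  obtain ⟨w⟩ := huv
  induction w with
  | nil => exact .inl rfl
  | @cons x y z hxy w ih =>
    refine or_iff_not_imp_left.2 fun hxz ↦ ?_
    obtain rfl | hyz := ih
    · exact hxy
    · rw [longPathGraph_adj] at hxy hyz ⊢
      obtain ⟨hadj, hle⟩ := (h x y hxy.1 hxy.2).adj_and_maxPathLen_le hxy.1 hyz.1 hxz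
      exact ⟨hadj, hxy.2.trans hle⟩

lemma reachable_longPathGraph_of_mem_support [Finite V] {w : G.Walk a b} (hw : w.IsPath)
    (hm : m ≤ w.length) (hx : x ∈ w.support) (hy : y ∈ w.support) :
    (longPathGraph G m).Reachable x y := by
  classical
  have hedges (e : Sym2 V) (he : e ∈ w.edges) : e ∈ (longPathGraph G m).edgeSet := by
    induction e with | _ c d
    exact longPathGraph_adj.2 ⟨w.adj_of_mem_edges he, hm.trans (length_le_maxPathLen hw he)⟩
  have reachable_start (c : V) (hc : c ∈ w.support) : (longPathGraph G m).Reachable a c :=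
    ((w.transfer _ hedges).takeUntil c (by simpa using hc)).reachable
  exact (reachable_start x hx).symm.trans (reachable_start y hy)

lemma isCliqueTight_of_forall_reachable [Finite V]
    (h : ∀ u v, (longPathGraph G m).Reachable u v → u = v ∨ (longPathGraph G m).Adj u v)
    (hxy : G.Adj x y) (hm : m ≤ maxPathLen G s(x, y)) : IsCliqueTight G s(x, y) := by
  classical
  obtain ⟨a, b, w, hw, he, hlen⟩ := exists_isPath_length_eq_maxPathLen hxy
  refine ⟨w.support.toFinset, ⟨fun u hu v hv huv ↦ ?_, ?_⟩, ?_⟩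
  · have := reachable_longPathGraph_of_mem_support hw (hlen ▸ hm) (List.mem_toFinset.1 hu)
      (List.mem_toFinset.1 hv)
    exact (longPathGraph_adj.1 ((h u v this).resolve_left huv)).1
  · rw [List.toFinset_card_of_nodup hw.support_nodup, w.length_support, hlen]
  · simp [w.fst_mem_support_of_mem_edges he, w.snd_mem_support_of_mem_edges he]

theorem forall_isCliqueTight_iff_forall_reachable [Finite V] :
    (∀ u v, G.Adj u v → m ≤ maxPathLen G s(u, v) → IsCliqueTight G s(u, v)) ↔
      ∀ u v, (longPathGraph G m).Reachable u v → u = v ∨ (longPathGraph G m).Adj u v :=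
  ⟨fun h _ _ ↦ longPathGraph_eq_or_adj_of_reachable h,
    fun h _ _ ↦ isCliqueTight_of_forall_reachable h⟩

end LongPathGraph

theorem stmt_4 {V : Type*} [Fintype V] [DecidableEq V] (G : SimpleGraph V)
    [DecidableRel G.Adj] (t : ℕ) (ht : 3 ≤ t) :
    (cliqueCount G t : ℚ) =
        (1 / (t.choose 2)) * ∑ e ∈ G.edgeFinset, ((maxPathLen G e - 1).choose (t - 2) : ℚ) ↔
      ∀ u v : V,
        (G.deleteEdges {e | e ∈ G.edgeSet ∧ maxPathLen G e < t - 1}).Reachable u v →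
          u = v ∨ (G.deleteEdges {e | e ∈ G.edgeSet ∧ maxPathLen G e < t - 1}).Adj u v := by
  obtain ⟨r, rfl⟩ := Nat.exists_eq_add_of_le' (show 2 ≤ t by lia)
  have choose_ne_zero : ((r + 2).choose 2 : ℚ) ≠ 0 :=
    mod_cast (Nat.choose_pos (Nat.le_add_left 2 r)).ne'
  rw [one_div, eq_inv_mul_iff_mul_eq₀ choose_ne_zero]
  norm_cast
  exact (choose_two_mul_cliqueCount_eq_iff (by lia)).trans
    forall_isCliqueTight_iff_forall_reachable
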